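/- Let k ≥ 1 and let G be a directed graph on a finite vertex set V (with no loops) in which every vertex has out-degree at most k and in-degree at most k. Then there exists a function f : V → {1,…,2k+1} such that f(u) ≠ f(v) for every arc (u,v) of G, and the sizes of any two level sets |f⁻¹(x)| and |f⁻¹(y)| differ by at most 1. -/

import Mathlib

/-!
The digraph is symmetrised to a graph of maximum degree at most `2k`, so this is an instance of the
Hajnal–Szemerédi theorem, for which the argument is that of Kierstead and Kostochka.

Adding a disjoint clique of at most `r` vertices makes the number of vertices a multiple of `r + 1`,
so that all classes are to have the same size `s`. Restoring the edges one vertex at a time leaves,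
at worst, a proper colouring with one class `p` of size `s + 1` and one class `v` of size `s - 1`.
Draw an arc from class `a` to class `b` when some vertex of `a` has no neighbour in `b`, and let `A`
be a set of classes from which `v` can be reached. If `p ∈ A`, shifting one vertex along each arc
of a path from `p` to `v` finishes. If a vertex outside `A` has no neighbour in some class of `A`,
then `A` can be enlarged.

Otherwise every vertex outside `A` has a neighbour in each class of `A`, and by the degree bound
only one, a solo neighbour, in many of them. Let `T` be a minimal nonempty set of classes of `A`
that some class of `A` separates from `v`; then removing a class of `T` leaves all other classes of
`A` accessible. Weighted double counting gives solo neighbours `z` in `T` and `y` outside `A` such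
that either `z` can be moved within `A`, or `z` has a second solo neighbour `y'` not adjacent to
`y`. By induction the vertices outside `A` other than `y` have an equitable colouring. In the first
case `y` takes the place of `z`, and shifting from the new class of `z` to `v` makes all classes
equal. In the second case `z` moves out of `A` and `y` takes its place; now `y'` can be moved to
the class of `y`, so that `A` can be enlarged.
-/

namespace HajnalSzemeredi

open Finset Function Relation

variable {V α : Type*}

section Reachability

/-- `ReachIn r D a v`: there is a path of `r`-steps from `a` to `v` all of whose vertices after `a`
lie in `D`. The start `a` is exempt, so that a path from `a` can be asked never to return to `a`. -/
def ReachIn (r : α → α → Prop) (D : Finset α) : α → α → Prop :=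
  ReflTransGen fun x y => y ∈ D ∧ r x y

variable {r r' : α → α → Prop} {A D D' : Finset α} {a b u v w x y : α}

theorem ReachIn.head (hb : b ∈ D) (hab : r a b) (h : ReachIn r D b v) : ReachIn r D a v :=
  ReflTransGen.head ⟨hb, hab⟩ h

theorem ReachIn.eq_or_mem (h : ReachIn r D a v) : v = a ∨ v ∈ D :=
  h.cases_tail.imp_right fun ⟨_, _, hv, _⟩ => hv

theorem ReachIn.mono_right (hD : D ⊆ D') (h : ReachIn r D a v) : ReachIn r D' a v :=
  ReflTransGen.mono (fun _ _ hxy => ⟨hD hxy.1, hxy.2⟩) _ _ h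

variable [DecidableEq α]

theorem ReachIn.mono (hD : D ⊆ D') (hr : ∀ x ∈ insert a D, ∀ y ∈ D, r x y → r' x y)
    (h : ReachIn r D a v) : ReachIn r' D' a v := by
  induction h with
  | refl => exact ReflTransGen.refl
  | tail hab hbc ih =>
    exact ih.tail ⟨hD hbc.1, hr _ (mem_insert.2 (ReachIn.eq_or_mem hab)) _ hbc.1 hbc.2⟩

theorem ReachIn.erase_or_erase (w : α) (h : ReachIn r D a v) :
    ReachIn r (D.erase w) a v ∨ ReachIn r (D.erase w) w v := by
  induction h using ReflTransGen.head_induction_on with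
  | refl => exact .inl .refl
  | @head x y hxy _ ih =>
    refine ih.elim (fun hy => ?_) .inr
    obtain rfl | hyw := eq_or_ne y w
    · exact .inr hy
    · exact .inl (hy.head (mem_erase.2 ⟨hyw, hxy.1⟩) hxy.2)

theorem ReachIn.erase_self (h : ReachIn r D a v) : ReachIn r (D.erase a) a v :=
  (h.erase_or_erase a).elim id id

open Classical in
/-- The members of `A` from which `v` can only be reached through `w`. -/
noncomputable def cutOff (r : α → α → Prop) (A : Finset α) (v w : α) : Finset α :=
  {x ∈ A | ¬ ReachIn r (A.erase w) x v}

theorem mem_cutOff : x ∈ cutOff r A v w ↔ x ∈ A ∧ ¬ ReachIn r (A.erase w) x v := by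
  classical exact mem_filter

theorem cutOff_subset : cutOff r A v w ⊆ A :=
  fun _ hx => (mem_cutOff.1 hx).1

theorem self_notMem_cutOff (hw : ReachIn r A w v) : w ∉ cutOff r A v w :=
  fun h => (mem_cutOff.1 h).2 hw.erase_self

theorem cutOff_target_nonempty (ha : a ∈ A) (hav : a ≠ v) : (cutOff r A v v).Nonempty :=
  ⟨a, mem_cutOff.2 ⟨ha, fun h => h.eq_or_mem.elim hav.symm (notMem_erase v A)⟩⟩

theorem cutOff_ssubset (hA : ∀ a ∈ A, ReachIn r A a v) (hw : w ∈ cutOff r A v u) :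
    cutOff r A v w ⊂ cutOff r A v u := by
  obtain ⟨hwA, hwu⟩ := mem_cutOff.1 hw
  refine (ssubset_iff_of_subset fun x hx => ?_).2 ⟨w, hw, self_notMem_cutOff (hA w hwA)⟩
  obtain ⟨hxA, hxw⟩ := mem_cutOff.1 hx
  refine mem_cutOff.2 ⟨hxA, fun hxu => hxw ?_⟩
  refine ((hxu.erase_or_erase w).resolve_right fun h => ?_).mono_right
    (erase_subset_erase w (erase_subset u A))
  exact hwu (h.mono_right (erase_subset w _))

theorem exists_minimal_cutOff (hv : v ∈ A) (hA : ∀ a ∈ A, ReachIn r A a v)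
    (hne : ∃ a ∈ A, a ≠ v) :
    ∃ u ∈ A, (cutOff r A v u).Nonempty ∧
      ∀ w ∈ cutOff r A v u, ∀ x ∈ A, ReachIn r (A.erase w) x v := by
  obtain ⟨a, ha, hav⟩ := hne
  obtain ⟨u, hu, hmin⟩ := exists_min_image {w ∈ A | (cutOff r A v w).Nonempty}
    (fun w => #(cutOff r A v w)) ⟨v, mem_filter.2 ⟨hv, cutOff_target_nonempty ha hav⟩⟩
  obtain ⟨huA, hu⟩ := mem_filter.1 hu
  refine ⟨u, huA, hu, fun w hw x hx => ?_⟩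
  by_contra hxw
  exact (card_lt_card (cutOff_ssubset hA hw)).not_ge
    (hmin w (mem_filter.2 ⟨cutOff_subset hw, x, mem_cutOff.2 ⟨hx, hxw⟩⟩))

theorem eq_or_mem_cutOff_of_rel (hx : x ∈ cutOff r A v u) (hy : y ∈ A) (hxy : r x y) :
    y = u ∨ y ∈ cutOff r A v u := by
  by_contra! h
  refine (mem_cutOff.1 hx).2 (ReachIn.head (mem_erase.2 ⟨h.1, hy⟩) hxy ?_)
  exact not_not.1 fun hyv => h.2 (mem_cutOff.2 ⟨hy, hyv⟩)

end Reachability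

section ColorClasses

variable [DecidableEq α] {G H : SimpleGraph V} {S S' : Finset V} {A C D : Finset α}
  {f f' : V → α} {c : α} {x y : V}

open Classical in
/-- The neighbours of `x` in `G` that lie in `S`. -/
noncomputable def neighborsIn (G : SimpleGraph V) (S : Finset V) (x : V) : Finset V :=
  {y ∈ S | G.Adj x y}

/-- The members of `S` that `f` colours with `c`. -/
def colorClass (S : Finset V) (f : V → α) (c : α) : Finset V :=
  {x ∈ S | f x = c}

/-- The members of `S` that `f` colours with a member of `A`: the union of the colour classes of
the colours in `A`. -/
def colorUnion (S : Finset V) (f : V → α) (A : Finset α) : Finset V :=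
  {x ∈ S | f x ∈ A}

theorem mem_neighborsIn : y ∈ neighborsIn G S x ↔ y ∈ S ∧ G.Adj x y := by
  classical exact mem_filter

theorem mem_colorClass : x ∈ colorClass S f c ↔ x ∈ S ∧ f x = c :=
  mem_filter

theorem mem_colorUnion : x ∈ colorUnion S f A ↔ x ∈ S ∧ f x ∈ A :=
  mem_filter

theorem neighborsIn_mono (h : S ⊆ S') : neighborsIn G S x ⊆ neighborsIn G S' x :=
  fun _ hy => mem_neighborsIn.2 ((mem_neighborsIn.1 hy).imp_left (h ·))

theorem neighborsIn_subset_of_le (h : G ≤ H) : neighborsIn G S x ⊆ neighborsIn H S x :=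
  fun _ hy => mem_neighborsIn.2 ((mem_neighborsIn.1 hy).imp_right (h ·))

theorem neighborsIn_subset : neighborsIn G S x ⊆ S :=
  fun _ hy => (mem_neighborsIn.1 hy).1

theorem card_neighborsIn_erase_lt [DecidableEq V] (hy : y ∈ S) (hxy : G.Adj x y) :
    #(neighborsIn G (S.erase y) x) < #(neighborsIn G S x) :=
  card_lt_card ((ssubset_iff_of_subset (neighborsIn_mono (erase_subset y S))).2
    ⟨y, mem_neighborsIn.2 ⟨hy, hxy⟩, fun h => notMem_erase y S (neighborsIn_subset h)⟩)

theorem colorUnion_subset : colorUnion S f A ⊆ S :=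
  filter_subset _ _

theorem colorUnion_mono (h : A ⊆ C) : colorUnion S f A ⊆ colorUnion S f C :=
  monotone_filter_right S fun _ _ hx => h hx

theorem card_colorUnion (S : Finset V) (f : V → α) (A : Finset α) :
    #(colorUnion S f A) = ∑ c ∈ A, #(colorClass S f c) := by
  rw [card_eq_sum_card_fiberwise fun x hx => (mem_colorUnion.1 hx).2]
  refine sum_congr rfl fun c hc => congrArg card ?_
  ext x
  simp only [mem_filter, mem_colorUnion, mem_colorClass]
  exact ⟨fun h => ⟨h.1.1, h.2⟩, fun h => ⟨⟨h.1, h.2 ▸ hc⟩, h.2⟩⟩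

theorem card_filter_colorUnion (S : Finset V) (f : V → α) (A : Finset α) (p : V → Prop)
    [DecidablePred p] :
    #{x ∈ colorUnion S f A | p x} = ∑ c ∈ A, #{x ∈ colorClass S f c | p x} := by
  simp only [colorUnion, colorClass, filter_comm (p := (_ : V → Prop)) (q := p)]
  exact card_colorUnion {x ∈ S | p x} f A

theorem card_neighborsIn_colorUnion (G : SimpleGraph V) (S : Finset V) (f : V → α)
    (A : Finset α) (x : V) :
    #(neighborsIn G (colorUnion S f A) x) = ∑ c ∈ A, #(neighborsIn G (colorClass S f c) x) := by
  classical exact card_filter_colorUnion S f A (G.Adj x)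

theorem sum_card_neighborsIn_add_le (h : Disjoint A D) :
    ∑ c ∈ A, #(neighborsIn G (colorClass S f c) x) + #(neighborsIn G (colorUnion S f D) x) ≤
      #(neighborsIn G S x) := by
  rw [card_neighborsIn_colorUnion, ← sum_union h, ← card_neighborsIn_colorUnion]
  exact card_le_card (neighborsIn_mono colorUnion_subset)

/-- `x` has a neighbour of colour `c` in `S`. -/
def SeesColor (G : SimpleGraph V) (S : Finset V) (f : V → α) (x : V) (c : α) : Prop :=
  (neighborsIn G (colorClass S f c) x).Nonempty

theorem seesColor_iff : SeesColor G S f x c ↔ ∃ y ∈ S, f y = c ∧ G.Adj x y := by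
  simp only [SeesColor, Finset.Nonempty, mem_neighborsIn, mem_colorClass, and_assoc]

theorem SeesColor.mono (h : colorClass S f c ⊆ colorClass S' f' c) (hx : SeesColor G S f x c) :
    SeesColor G S' f' x c :=
  Finset.Nonempty.mono (neighborsIn_mono h) hx

theorem card_add_card_neighborsIn_le (h : Disjoint A D) (hA : ∀ c ∈ A, SeesColor G S f x c) :
    #A + #(neighborsIn G (colorUnion S f D) x) ≤ #(neighborsIn G S x) := by
  refine le_trans (Nat.add_le_add_right ?_ _) (sum_card_neighborsIn_add_le h)
  rw [card_eq_sum_ones]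
  exact sum_le_sum fun c hc => card_pos.2 (hA c hc)

theorem exists_not_seesColor (h : #(neighborsIn G S x) < #C) : ∃ c ∈ C, ¬ SeesColor G S f x c := by
  by_contra! hC
  have := card_add_card_neighborsIn_le (disjoint_empty_right C) hC
  omega

/-- Some vertex of `S` of colour `a` can be given colour `b` while keeping the colouring proper.
This is the arc relation of the auxiliary digraph on colour classes. -/
def Movable (G : SimpleGraph V) (S : Finset V) (f : V → α) (a b : α) : Prop :=
  ∃ x ∈ colorClass S f a, ¬ SeesColor G S f x b

theorem Movable.mono {a b : α} (ha : colorClass S f a ⊆ colorClass S' f' a)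
    (hb : colorClass S' f' b ⊆ colorClass S f b) (h : Movable G S f a b) : Movable G S' f' a b :=
  h.imp fun _ hx => ⟨ha hx.1, fun h => hx.2 (h.mono hb)⟩

end ColorClasses

section Recolouring

variable [DecidableEq α] {G H : SimpleGraph V} {S B : Finset V} {A C D : Finset α}
  {f g : V → α} {n m : α → ℤ} {a b v : α} {x : V}

/-- `f` restricts to a proper colouring of `G` on `S` with colours in `C`, whose class of colour
`c` has `n c` members. Sizes are integers so that the effect of recolouring a vertex can be written
by adding and subtracting `Pi.single`s. -/
structure IsColoringOn (G : SimpleGraph V) (S : Finset V) (C : Finset α) (n : α → ℤ)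
    (f : V → α) : Prop where
  mem : ∀ x ∈ S, f x ∈ C
  proper : ∀ x ∈ S, ∀ y ∈ S, G.Adj x y → f x ≠ f y
  card : ∀ c ∈ C, (#(colorClass S f c) : ℤ) = n c

namespace IsColoringOn

theorem congr_size (hf : IsColoringOn G S C n f) (h : ∀ c ∈ C, n c = m c) :
    IsColoringOn G S C m f :=
  ⟨hf.mem, hf.proper, fun c hc => (hf.card c hc).trans (h c hc)⟩

theorem of_adj (hf : IsColoringOn G S C n f) (h : ∀ x ∈ S, ∀ y ∈ S, H.Adj x y → G.Adj x y) :
    IsColoringOn H S C n f :=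
  ⟨hf.mem, fun x hx y hy hxy => hf.proper x hx y hy (h x hx y hy hxy), hf.card⟩

protected theorem restrict (hf : IsColoringOn G S C n f) (hA : A ⊆ C) :
    IsColoringOn G (colorUnion S f A) A n f where
  mem x hx := (mem_colorUnion.1 hx).2
  proper x hx y hy := hf.proper x (colorUnion_subset hx) y (colorUnion_subset hy)
  card c hc := by
    rw [← hf.card c (hA hc)]
    congr 2
    ext x
    simp only [mem_colorClass, mem_colorUnion]
    exact ⟨fun h => ⟨h.1.1, h.2⟩, fun h => ⟨⟨h.1, h.2 ▸ hc⟩, h.2⟩⟩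

protected theorem erase [DecidableEq V] (hf : IsColoringOn G S C n f) (hx : x ∈ S) :
    IsColoringOn G (S.erase x) C (n - Pi.single (f x) 1) f where
  mem y hy := hf.mem y (mem_of_mem_erase hy)
  proper y hy z hz := hf.proper y (mem_of_mem_erase hy) z (mem_of_mem_erase hz)
  card c hc := by
    rw [Pi.sub_apply, ← hf.card c hc, colorClass, filter_erase, Pi.single_apply]
    split_ifs with h
    · have hxc : x ∈ colorClass S f c := mem_colorClass.2 ⟨hx, h.symm⟩
      rw [eq_sub_iff_add_eq]
      exact_mod_cast card_erase_add_one hxc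
    · have hxc : x ∉ colorClass S f c := fun hxc => h (mem_colorClass.1 hxc).2.symm
      rw [sub_zero, ← colorClass, erase_eq_of_notMem hxc]

protected theorem insert [DecidableEq V] (hf : IsColoringOn G S C n f) (hx : x ∉ S) (hb : b ∈ C)
    (hxb : ¬ SeesColor G S f x b) :
    IsColoringOn G (insert x S) C (n + Pi.single b 1) (update f x b) := by
  have hfS : ∀ y ∈ S, update f x b y = f y := fun y hy =>
    update_of_ne (ne_of_mem_of_not_mem hy hx) _ _
  have hadj : ∀ y ∈ S, G.Adj x y → b ≠ f y := fun y hy hxy h =>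
    hxb (seesColor_iff.2 ⟨y, hy, h.symm, hxy⟩)
  refine ⟨fun y hy => ?_, fun y hy z hz hyz => ?_, fun c hc => ?_⟩
  · obtain rfl | hy := mem_insert.1 hy
    · rwa [update_self]
    · rw [hfS y hy]; exact hf.mem y hy
  · obtain hyx | hyS := mem_insert.1 hy <;> obtain hzx | hzS := mem_insert.1 hz
    · exact absurd (hyx.trans hzx.symm) hyz.ne
    · rw [hyx, update_self, hfS z hzS]; exact hadj z hzS (hyx ▸ hyz)
    · rw [hzx, update_self, hfS y hyS]; exact (hadj y hyS (hzx ▸ hyz.symm)).symm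
    · rw [hfS y hyS, hfS z hzS]; exact hf.proper y hyS z hzS hyz
  · rw [Pi.add_apply, ← hf.card c hc, colorClass, filter_insert, update_self, Pi.single_apply,
      filter_congr fun y hy => by rw [hfS y hy]]
    simp only [eq_comm (a := c)]
    split_ifs
    · rw [card_insert_of_notMem fun h => hx (mem_of_mem_filter _ h)]
      push_cast
      rfl
    · rw [add_zero, colorClass]

theorem recolor [DecidableEq V] (hf : IsColoringOn G S C n f) (hx : x ∈ S) (hb : b ∈ C)
    (hxb : ¬ SeesColor G S f x b) :
    IsColoringOn G S C (n - Pi.single (f x) 1 + Pi.single b 1) (update f x b) := by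
  have h := (hf.erase hx).insert (notMem_erase x S) hb
    fun h => hxb (h.mono (filter_subset_filter _ (erase_subset x S)))
  rwa [insert_erase hx] at h

protected theorem union [DecidableEq V] (hf : IsColoringOn G S A n f) (hg : IsColoringOn G B D n g)
    (hSB : Disjoint S B) (hAD : Disjoint A D) :
    IsColoringOn G (S ∪ B) (A ∪ D) n (B.piecewise g f) := by
  have hB : ∀ x ∈ B, B.piecewise g f x = g x := fun x hx => piecewise_eq_of_mem _ _ _ hx
  have hS : ∀ x ∈ S, B.piecewise g f x = f x := fun x hx =>
    piecewise_eq_of_notMem _ _ _ (disjoint_left.1 hSB hx)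
  have hne : ∀ x ∈ S, ∀ y ∈ B, f x ≠ g y := fun x hx y hy =>
    disjoint_iff_ne.1 hAD _ (hf.mem x hx) _ (hg.mem y hy)
  have hcard : ∀ c, #(colorClass (S ∪ B) (B.piecewise g f) c) =
      #(colorClass S f c) + #(colorClass B g c) := fun c => by
    rw [colorClass, filter_union, filter_congr fun x hx => by rw [hS x hx],
      filter_congr (s := B) fun x hx => by rw [hB x hx]]
    exact card_union_of_disjoint (disjoint_filter_filter hSB)
  refine ⟨fun x hx => ?_, fun x hx y hy hxy => ?_, fun c hc => ?_⟩
  · obtain hx | hx := mem_union.1 hx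
    · rw [hS x hx]; exact mem_union_left _ (hf.mem x hx)
    · rw [hB x hx]; exact mem_union_right _ (hg.mem x hx)
  · obtain hx | hx := mem_union.1 hx <;> obtain hy | hy := mem_union.1 hy
    · rw [hS x hx, hS y hy]; exact hf.proper x hx y hy hxy
    · rw [hS x hx, hB y hy]; exact hne x hx y hy
    · rw [hB x hx, hS y hy]; exact (hne y hy x hx).symm
    · rw [hB x hx, hB y hy]; exact hg.proper x hx y hy hxy
  · rw [hcard]
    obtain hc | hc := mem_union.1 hc
    · have hgc : colorClass B g c = ∅ :=
        filter_eq_empty_iff.2 fun x hx h => disjoint_left.1 hAD hc (h ▸ hg.mem x hx)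
      rw [hgc, card_empty, add_zero, hf.card c hc]
    · have hfc : colorClass S f c = ∅ :=
        filter_eq_empty_iff.2 fun x hx h => disjoint_right.1 hAD hc (h ▸ hf.mem x hx)
      rw [hfc, card_empty, zero_add, hg.card c hc]

theorem exists_shift (hf : IsColoringOn G S C n f) (hD : D ⊆ C)
    (h : ReachIn (Movable G S f) D a v) :
    ∃ f', IsColoringOn G S C (n - Pi.single a 1 + Pi.single v 1) f' := by
  classical
  induction D using Finset.strongInduction generalizing f n a with
  | H D ih =>
  obtain rfl | ⟨b, ⟨hb, x, hx, hxb⟩, hbv⟩ := h.erase_self.cases_head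
  · exact ⟨f, by rwa [sub_add_cancel]⟩
  obtain ⟨hxS, rfl⟩ := mem_colorClass.1 hx
  obtain ⟨hba, hbD⟩ := mem_erase.1 hb
  have hss : (D.erase (f x)).erase b ⊂ D :=
    (erase_ssubset hb).trans_subset (erase_subset _ _)
  have hbv' : ReachIn (Movable G S (update f x b)) ((D.erase (f x)).erase b) b v := by
    refine (ReachIn.erase_self hbv).mono subset_rfl fun c hc d hd => Movable.mono ?_ ?_
    · have hcx : c ≠ f x := by
        obtain rfl | hc := mem_insert.1 hc
        exacts [hba, (mem_erase.1 (mem_of_mem_erase hc)).1]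
      intro y hy
      obtain ⟨hyS, rfl⟩ := mem_colorClass.1 hy
      exact mem_colorClass.2 ⟨hyS, update_of_ne (fun h => hcx (congrArg f h)) _ _⟩
    · intro y hy
      obtain ⟨hyS, hyd⟩ := mem_colorClass.1 hy
      have hyx : y ≠ x := by
        rintro rfl
        exact (mem_erase.1 hd).1 (by rw [← hyd, update_self])
      exact mem_colorClass.2 ⟨hyS, by rw [← hyd, update_of_ne hyx]⟩
  obtain ⟨f', hf'⟩ := ih _ hss (hf.recolor hxS (hD hbD) hxb) (hss.subset.trans hD) hbv'
  exact ⟨f', hf'.congr_size fun c _ => by simp only [Pi.add_apply, Pi.sub_apply]; ring⟩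

end IsColoringOn

end Recolouring

section SoloNeighbors

theorem card_mul_le_card_mul_of_inverse_weights {β γ : Type*} (R : β → γ → Prop)
    [∀ y z, Decidable (R y z)] {B : Finset β} {K : Finset γ} {q t : ℕ} (d : β → ℕ) (hqt : q ≤ t)
    (hd : ∀ y ∈ B, d y + 1 ≤ q) (habove : ∀ y ∈ B, t + 1 + d y ≤ #{z ∈ K | R y z} + q)
    (hbelow : ∀ y ∈ B, ∀ z ∈ K, R y z → #{y' ∈ B | R y' z} ≤ d y + 1) :
    #B * t ≤ #K * q := by
  -- Each `z` distributes a total weight of at most `q` equally among its `R`-predecessors in `B`.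
  set w : γ → ℚ := fun z => q / #{y ∈ B | R y z} with hw
  have hlower : ∀ y ∈ B, (t : ℚ) ≤ ∑ z ∈ K with R y z, w z := fun y hy => by
    have hdy : (d y : ℚ) + 1 ≤ q := mod_cast hd y hy
    have hcard : (t : ℚ) + 1 + d y ≤ #{z ∈ K | R y z} + q := mod_cast habove y hy
    have hqt' : (q : ℚ) ≤ t := mod_cast hqt
    calc (t : ℚ) ≤ #{z ∈ K | R y z} * (q / (d y + 1)) := by
          rw [← mul_div_assoc, le_div_iff₀ (by positivity)]
          nlinarith
      _ = ∑ z ∈ K with R y z, (q : ℚ) / (d y + 1) := by rw [sum_const, nsmul_eq_mul]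
      _ ≤ ∑ z ∈ K with R y z, w z := sum_le_sum fun z hz => by
          obtain ⟨hzK, hyz⟩ := mem_filter.1 hz
          have hpos : 0 < #{y' ∈ B | R y' z} := card_pos.2 ⟨y, mem_filter.2 ⟨hy, hyz⟩⟩
          have hle : (#{y' ∈ B | R y' z} : ℚ) ≤ d y + 1 := mod_cast hbelow y hy z hzK hyz
          exact div_le_div_of_nonneg_left (by positivity) (mod_cast hpos) hle
  have hupper : ∀ z ∈ K, ∑ y ∈ B with R y z, w z ≤ (q : ℚ) := fun z _ => by
    rw [sum_const, nsmul_eq_mul, hw]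
    obtain h | h := eq_or_ne (#{y ∈ B | R y z} : ℚ) 0
    · rw [h, zero_mul]; positivity
    · exact (mul_div_cancel₀ _ h).le
  have hsum : (#B * t : ℚ) ≤ #K * q :=
    calc (#B * t : ℚ) = ∑ _y ∈ B, (t : ℚ) := by rw [sum_const, nsmul_eq_mul]
      _ ≤ ∑ y ∈ B, ∑ z ∈ K with R y z, w z := sum_le_sum hlower
      _ = ∑ z ∈ K, ∑ y ∈ B with R y z, w z :=
        sum_comm' fun y z => by simp only [mem_filter]; tauto
      _ ≤ ∑ _z ∈ K, (q : ℚ) := sum_le_sum hupper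
      _ = #K * q := by rw [sum_const, nsmul_eq_mul]
  exact_mod_cast hsum

variable {G : SimpleGraph V}

theorem sum_sum_neighborsIn (G : SimpleGraph V) (B W : Finset V) (w : V → ℕ) :
    ∑ y ∈ B, ∑ z ∈ neighborsIn G W y, w z = ∑ z ∈ W, #(neighborsIn G B z) * w z := by
  simp only [← smul_eq_mul, ← sum_const]
  refine sum_comm' fun y z => ?_
  simp only [mem_neighborsIn, G.adj_comm z y]
  tauto

theorem lt_of_unique_neighborsIn {B W : Finset V} {q t : ℕ} (hcard : q * #W < #B)
    (hne : ∀ y ∈ B, (neighborsIn G W y).Nonempty)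
    (hunique : ∀ z ∈ W, ∀ y ∈ B, neighborsIn G W y = {z} → #(neighborsIn G B z) ≤ q)
    (hall : ∀ z ∈ W, #(neighborsIn G B z) ≤ q + t) : q < t := by
  classical
  by_contra! htq
  let w : V → ℕ := fun z => if ∃ y ∈ B, neighborsIn G W y = {z} then 2 else 1
  have hone : ∀ z, 1 ≤ w z := fun z => by simp only [w]; split_ifs <;> norm_num
  have hlower : ∀ y ∈ B, 2 ≤ ∑ z ∈ neighborsIn G W y, w z := fun y hy => by
    obtain hy1 | hy2 := (Nat.one_le_iff_ne_zero.2 (card_pos.2 (hne y hy)).ne').eq_or_lt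
    · obtain ⟨z, hz⟩ := card_eq_one.1 hy1.symm
      rw [hz, sum_singleton]
      exact (if_pos ⟨y, hy, hz⟩).ge
    · exact hy2.trans_le ((card_eq_sum_ones _).trans_le (sum_le_sum fun z _ => hone z))
  have hupper : ∀ z ∈ W, #(neighborsIn G B z) * w z ≤ q * 2 := fun z hz => by
    simp only [w]
    split_ifs with h
    · obtain ⟨y, hy, hyz⟩ := h
      exact Nat.mul_le_mul_right 2 (hunique z hz y hy hyz)
    · have := hall z hz
      omega
  have hsum : #B * 2 ≤ #W * (q * 2) :=
    calc #B * 2 ≤ ∑ y ∈ B, ∑ z ∈ neighborsIn G W y, w z := card_nsmul_le_sum _ _ _ hlower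
      _ = ∑ z ∈ W, #(neighborsIn G B z) * w z := sum_sum_neighborsIn G B W w
      _ ≤ #W * (q * 2) := sum_le_card_nsmul _ _ _ hupper
  linarith

variable [DecidableEq α] {S : Finset V} {A D T : Finset α} {f : V → α} {U c : α} {y z : V}

/-- `z` is the only neighbour of `y` in its colour class: in the terminology of Kierstead and
Kostochka, `z` and `y` are solo neighbours of each other. -/
def Solo (G : SimpleGraph V) (S : Finset V) (f : V → α) (z y : V) : Prop :=
  neighborsIn G (colorClass S f (f z)) y = {z}

theorem Solo.adj (h : Solo G S f z y) : G.Adj y z :=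
  (mem_neighborsIn.1 (h.ge (mem_singleton_self z))).2

theorem Solo.eq (h : Solo G S f z y) {w : V} (hw : w ∈ S) (hwz : f w = f z) (hyw : G.Adj y w) :
    w = z :=
  mem_singleton.1 (h.le (mem_neighborsIn.2 ⟨mem_colorClass.2 ⟨hw, hwz⟩, hyw⟩))

open scoped Classical in
theorem two_le_card_neighborsIn_add_card_solo (hy : SeesColor G S f y c) :
    2 ≤ #(neighborsIn G (colorClass S f c) y) + #{z ∈ colorClass S f c | Solo G S f z y} := by
  have hpos : 0 < #(neighborsIn G (colorClass S f c) y) := card_pos.2 hy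
  by_cases h : #(neighborsIn G (colorClass S f c) y) = 1
  · obtain ⟨z, hz⟩ := card_eq_one.1 h
    have hzc : z ∈ colorClass S f c := neighborsIn_subset (hz.ge (mem_singleton_self z))
    have hsolo : Solo G S f z y := by rwa [Solo, (mem_colorClass.1 hzc).2]
    have : 0 < #{z ∈ colorClass S f c | Solo G S f z y} :=
      card_pos.2 ⟨z, mem_filter.2 ⟨hzc, hsolo⟩⟩
    omega
  · omega

open scoped Classical in
theorem card_add_card_add_card_neighborsIn_le (hAD : Disjoint A D) (hTA : T ⊆ A)
    (hA : ∀ c ∈ A, SeesColor G S f y c) :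
    #A + #T + #(neighborsIn G (colorUnion S f D) y) ≤
      #(neighborsIn G S y) + #{z ∈ colorUnion S f T | Solo G S f z y} := by
  have hsdiff : #(A \ T) ≤ ∑ c ∈ A \ T, #(neighborsIn G (colorClass S f c) y) :=
    (card_eq_sum_ones _).trans_le
      (sum_le_sum fun c hc => card_pos.2 (hA c (mem_sdiff.1 hc).1))
  have hT : #T * 2 ≤ ∑ c ∈ T, #(neighborsIn G (colorClass S f c) y) +
      #{z ∈ colorUnion S f T | Solo G S f z y} := by
    rw [card_filter_colorUnion, ← sum_add_distrib]
    exact card_nsmul_le_sum _ _ _ fun c hc => two_le_card_neighborsIn_add_card_solo (hA c (hTA hc))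
  have hle := sum_card_neighborsIn_add_le (G := G) (S := S) (f := f) (x := y) hAD
  rw [← sum_sdiff hTA] at hle
  have := card_sdiff_add_card_eq_card hTA
  omega

theorem card_lt_card_of_solo (hdeg : ∀ x ∈ S, #(neighborsIn G S x) < #A + #D)
    (hAD : Disjoint A D) (hTA : T ⊆ A) (hc : c ∈ T) (hU : U ∈ A) (hUT : U ∉ T)
    (hcard : #D * #(colorClass S f c) < #(colorUnion S f D))
    (hB : ∀ y ∈ colorUnion S f D, SeesColor G S f y c)
    (hsolo : ∀ z ∈ colorClass S f c, ∀ y ∈ colorUnion S f D, Solo G S f z y →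
      ∀ a ∈ A.erase c, SeesColor G S f z a)
    (hT : ∀ z ∈ colorClass S f c, ∀ a ∈ A \ insert U T, SeesColor G S f z a) :
    #D < #T := by
  refine lt_of_unique_neighborsIn hcard hB (fun z hz y hy hyz => ?_) fun z hz => ?_
  · obtain ⟨hzS, rfl⟩ := mem_colorClass.1 hz
    have hle := card_add_card_neighborsIn_le (hAD.mono_left (erase_subset (f z) A))
      (hsolo z hz y hy hyz)
    have := card_erase_add_one (hTA hc)
    have := hdeg z hzS
    omega
  · have hle := card_add_card_neighborsIn_le (hAD.mono_left sdiff_subset) (hT z hz)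
    have := card_sdiff_add_card_eq_card (insert_subset hU hTA)
    have := card_insert_of_notMem hUT
    have := hdeg z (mem_colorClass.1 hz).1
    omega

theorem exists_solo_not_adj (hdeg : ∀ x ∈ S, #(neighborsIn G S x) < #A + #D)
    (hAD : Disjoint A D) (hTA : T ⊆ A) (hDT : #D ≤ #T)
    (hcard : #D * #(colorUnion S f T) < #T * #(colorUnion S f D))
    (hB : ∀ y ∈ colorUnion S f D, ∀ c ∈ A, SeesColor G S f y c) :
    ∃ z ∈ colorUnion S f T, ∃ y ∈ colorUnion S f D, ∃ y' ∈ colorUnion S f D,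
      Solo G S f z y ∧ Solo G S f z y' ∧ y' ≠ y ∧ ¬ G.Adj y y' := by
  classical
  by_contra! hadj
  refine hcard.not_ge ?_
  rw [mul_comm, mul_comm (#D)]
  refine card_mul_le_card_mul_of_inverse_weights (fun y z => Solo G S f z y)
    (fun y => #(neighborsIn G (colorUnion S f D) y)) hDT (fun y hy => ?_) (fun y hy => ?_)
    fun y hy z hz hyz => ?_
  · have := card_add_card_neighborsIn_le hAD (hB y hy)
    have := hdeg y (colorUnion_subset hy)
    omega
  · have := card_add_card_add_card_neighborsIn_le hAD hTA (hB y hy)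
    have := hdeg y (colorUnion_subset hy)
    omega
  · refine (card_le_card fun y' hy' => ?_).trans
      (card_insert_le y (neighborsIn G (colorUnion S f D) y))
    obtain ⟨hy'B, hy'z⟩ := mem_filter.1 hy'
    rw [mem_insert, mem_neighborsIn]
    exact or_iff_not_imp_left.2 fun h => ⟨hy'B, hadj z hz y hy y' hy'B hyz hy'z h⟩

theorem exists_solo (hdeg : ∀ x ∈ S, #(neighborsIn G S x) < #A + #D)
    (hAD : Disjoint A D) (hTA : T ⊆ A) (hTne : T.Nonempty) (hU : U ∈ A) (hUT : U ∉ T)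
    (hcard : ∀ c ∈ T, #D * #(colorClass S f c) < #(colorUnion S f D))
    (hB : ∀ y ∈ colorUnion S f D, ∀ c ∈ A, SeesColor G S f y c)
    (hT : ∀ z ∈ colorUnion S f T, ∀ a ∈ A \ insert U T, SeesColor G S f z a) :
    ∃ z ∈ colorUnion S f T, ∃ y ∈ colorUnion S f D, Solo G S f z y ∧
      ((∃ a ∈ A.erase (f z), ¬ SeesColor G S f z a) ∨
        (∀ a ∈ A.erase (f z), SeesColor G S f z a) ∧
          ∃ y' ∈ colorUnion S f D, Solo G S f z y' ∧ y' ≠ y ∧ ¬ G.Adj y y') := by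
  by_cases hstuck : ∀ z ∈ colorUnion S f T, ∀ y ∈ colorUnion S f D, Solo G S f z y →
      ∀ a ∈ A.erase (f z), SeesColor G S f z a
  · have hclass : ∀ c ∈ T, ∀ z ∈ colorClass S f c, z ∈ colorUnion S f T ∧ f z = c :=
      fun c hc z hz => by
        obtain ⟨hzS, rfl⟩ := mem_colorClass.1 hz
        exact ⟨mem_colorUnion.2 ⟨hzS, hc⟩, rfl⟩
    have hDT : #D < #T := by
      obtain ⟨c, hc⟩ := hTne
      refine card_lt_card_of_solo hdeg hAD hTA hc hU hUT (hcard c hc)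
        (fun y hy => hB y hy c (hTA hc)) (fun z hz y hy hzy => ?_)
        fun z hz => hT z (hclass c hc z hz).1
      obtain ⟨hzT, rfl⟩ := hclass c hc z hz
      exact hstuck z hzT y hy hzy
    have hcardT : #D * #(colorUnion S f T) < #T * #(colorUnion S f D) := by
      rw [card_colorUnion S f T, mul_sum, ← smul_eq_mul (#T), ← sum_const]
      exact sum_lt_sum_of_nonempty hTne hcard
    obtain ⟨z, hz, y, hy, y', hy', hzy, hzy', hne, hadj⟩ :=
      exists_solo_not_adj hdeg hAD hTA hDT.le hcardT hB
    exact ⟨z, hz, y, hy, hzy, .inr ⟨hstuck z hz y hy hzy, y', hy', hzy', hne, hadj⟩⟩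
  · push Not at hstuck
    obtain ⟨z, hz, y, hy, hzy, hza⟩ := hstuck
    exact ⟨z, hz, y, hy, hzy, .inl hza⟩

end SoloNeighbors

section Exchange

variable [DecidableEq V] [DecidableEq α] {G : SimpleGraph V} {S : Finset V} {A C : Finset α}
  {f g h : V → α} {n m : α → ℤ} {a b v : α} {y y' z : V}

theorem IsColoringOn.insert_erase_of_solo (hf : IsColoringOn G S C n f) (hAC : A ⊆ C)
    (hz : z ∈ colorUnion S f A) (hyA : f y ∉ A) (hzy : Solo G S f z y) :
    IsColoringOn G (insert y ((colorUnion S f A).erase z)) A n (update f y (f z)) := by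
  have hy : y ∉ (colorUnion S f A).erase z := fun hy =>
    hyA (mem_colorUnion.1 (mem_of_mem_erase hy)).2
  refine (((hf.restrict hAC).erase hz).insert hy (mem_colorUnion.1 hz).2 fun hsees => ?_).congr_size
    fun c _ => by rw [sub_add_cancel]
  obtain ⟨x, hx, hxz, hyx⟩ := seesColor_iff.1 hsees
  obtain ⟨hne, hxA⟩ := mem_erase.1 hx
  exact hne (hzy.eq (colorUnion_subset hxA) hxz hyx)

theorem IsColoringOn.exists_insert_of_solo_movable (hf : IsColoringOn G S C n f) (hAC : A ⊆ C)
    (hz : z ∈ colorUnion S f A) (hyA : f y ∉ A) (hzy : Solo G S f z y) (ha : a ∈ A.erase (f z))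
    (hza : ¬ SeesColor G S f z a) (hav : ReachIn (Movable G S f) (A.erase (f z)) a v) :
    ∃ f', IsColoringOn G (insert y (colorUnion S f A)) A (n + Pi.single v 1) f' := by
  have hyz : y ≠ z := fun hyz => hyA (hyz ▸ (mem_colorUnion.1 hz).2)
  have hzS : z ∉ insert y ((colorUnion S f A).erase z) := by
    simp only [mem_insert, mem_erase, ne_eq, not_true_eq_false, false_and, or_false, hyz.symm,
      not_false_eq_true]
  have hnot_sees : ¬ SeesColor G (insert y ((colorUnion S f A).erase z)) (update f y (f z)) z a :=
    fun hsees => hza (hsees.mono fun x hx => by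
      grind [mem_colorClass, mem_colorUnion, update_apply])
  have hf' := (hf.insert_erase_of_solo hAC hz hyA hzy).insert hzS (mem_of_mem_erase ha) hnot_sees
  rw [insert_comm, insert_erase hz] at hf'
  have hav' : ReachIn (Movable G (insert y (colorUnion S f A)) (update (update f y (f z)) z a))
      ((A.erase (f z)).erase a) a v := by
    refine hav.erase_self.mono subset_rfl fun c hc d hd => Movable.mono (fun x hx => ?_)
      fun x hx => ?_
    · grind [mem_colorClass, mem_colorUnion, update_apply]
    · grind [mem_colorClass, mem_colorUnion, update_apply]
  obtain ⟨f'', hf''⟩ := hf'.exists_shift ((erase_subset _ _).trans (erase_subset _ _)) hav'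
  exact ⟨f'', hf''.congr_size fun c _ => by simp only [Pi.add_apply, Pi.sub_apply]; ring⟩

theorem IsColoringOn.exists_exchange (hf : IsColoringOn G S C n f) (hAC : A ⊆ C)
    (hz : z ∈ colorUnion S f A) (hy : y ∈ colorUnion S f (C \ A)) (hzy : Solo G S f z y)
    (hg : IsColoringOn G ((colorUnion S f (C \ A)).erase y) (C \ A) m g)
    (hm : ∀ c ∈ A, (#(colorClass S f c) : ℤ) = m c) (hb : b ∈ C \ A)
    (hzb : ¬ SeesColor G ((colorUnion S f (C \ A)).erase y) g z b) :
    ∃ h, IsColoringOn G S C (m + Pi.single b 1) h ∧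
      (∀ c ∈ A.erase (f z), colorClass S h c = colorClass S f c) ∧
      colorClass S h (f z) = insert y ((colorClass S f (f z)).erase z) := by
  set B := (colorUnion S f (C \ A)).erase y
  set S₁ := insert y ((colorUnion S f A).erase z)
  obtain ⟨hzS, hzA⟩ := mem_colorUnion.1 hz
  obtain ⟨hyS, hyC⟩ := mem_colorUnion.1 hy
  have hyA : f y ∉ A := (mem_sdiff.1 hyC).2
  have hgB : ∀ x ∈ B, g x ∉ A := fun x hx => (mem_sdiff.1 (hg.mem x hx)).2
  have hdisj : Disjoint S₁ B := disjoint_left.2 fun x hx hxB => by grind [mem_colorUnion]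
  have hunion : S₁ ∪ B = S.erase z := by
    ext x
    have := hf.mem x
    grind [mem_colorUnion]
  have hnm : ∀ c ∈ A, n c = m c := fun c hc => (hf.card c (hAC hc)).symm.trans (hm c hc)
  have hh := ((hf.insert_erase_of_solo hAC hz hyA hzy).congr_size hnm).union hg hdisj
    disjoint_sdiff
  rw [hunion, union_sdiff_of_subset hAC] at hh
  have hnot_sees : ¬ SeesColor G (S.erase z) (B.piecewise g (update f y (f z))) z b :=
    fun hsees => hzb (hsees.mono fun x hx => by
      have := hf.mem x
      grind [mem_colorClass, mem_colorUnion, update_apply, piecewise])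
  have hh' := hh.insert (notMem_erase z S) (mem_sdiff.1 hb).1 hnot_sees
  rw [insert_erase hzS] at hh'
  refine ⟨_, hh', fun c hc => ?_, ?_⟩
  · ext x
    have := hf.mem x
    have := hgB x
    grind [mem_colorClass, mem_colorUnion, update_apply, piecewise]
  · ext x
    have := hf.mem x
    have := hgB x
    grind [mem_colorClass, mem_colorUnion, update_apply, piecewise]

theorem ReachIn.of_exchange (hstuck : ∀ c ∈ A.erase (f z), SeesColor G S f z c)
    (hclass : ∀ c ∈ A.erase (f z), colorClass S h c = colorClass S f c)
    (hclass_z : colorClass S h (f z) = insert y ((colorClass S f (f z)).erase z)) (ha : a ∈ A)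
    (hav : ReachIn (Movable G S f) (A.erase (f z)) a v) :
    ReachIn (Movable G S h) (A.erase (f z)) a v := by
  refine hav.mono subset_rfl fun c hc d hd ⟨w, hw, hwd⟩ => ⟨w, ?_, fun hsees => hwd ?_⟩
  · have hwz : w ≠ z := fun hwz => hwd (hwz ▸ hstuck d hd)
    obtain rfl | hcz := eq_or_ne c (f z)
    · rw [hclass_z]
      exact mem_insert_of_mem (mem_erase.2 ⟨hwz, hw⟩)
    · have hcA : c ∈ A := (mem_insert.1 hc).elim (fun hca => hca ▸ ha) mem_of_mem_erase
      rwa [hclass c (mem_erase.2 ⟨hcz, hcA⟩)]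
  · exact hsees.mono (hclass d hd).le

theorem not_seesColor_of_exchange
    (hclass_z : colorClass S h (f z) = insert y ((colorClass S f (f z)).erase z))
    (hzy' : Solo G S f z y') (hadj : ¬ G.Adj y y') : ¬ SeesColor G S h y' (f z) := by
  intro hsees
  obtain ⟨x, hxS, hxz, hyx⟩ := seesColor_iff.1 hsees
  have hx : x ∈ colorClass S h (f z) := mem_colorClass.2 ⟨hxS, hxz⟩
  rw [hclass_z] at hx
  obtain rfl | hx := mem_insert.1 hx
  · exact hadj hyx.symm
  · obtain ⟨hne, hx⟩ := mem_erase.1 hx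
    exact hne (hzy'.eq hxS (mem_colorClass.1 hx).2 hyx)

theorem notMem_of_exchange (hzA : f z ∈ A)
    (hclass : ∀ c ∈ A.erase (f z), colorClass S h c = colorClass S f c)
    (hclass_z : colorClass S h (f z) = insert y ((colorClass S f (f z)).erase z))
    (hy'S : y' ∈ S) (hy'A : f y' ∉ A) (hne : y' ≠ y) : h y' ∉ A := by
  intro hA
  have hmem : y' ∈ colorClass S h (h y') := mem_colorClass.2 ⟨hy'S, rfl⟩
  obtain heq | hhz := eq_or_ne (h y') (f z)
  · rw [heq, hclass_z] at hmem
    have hy'z := (mem_colorClass.1 (mem_of_mem_erase (mem_of_mem_insert_of_ne hmem hne))).2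
    exact hy'A (hy'z ▸ hzA)
  · rw [hclass _ (mem_erase.2 ⟨hhz, hA⟩)] at hmem
    exact hy'A ((mem_colorClass.1 hmem).2 ▸ hA)

end Exchange

section NearlyEquitable

variable [DecidableEq α] {G : SimpleGraph V} {S : Finset V} {A C : Finset α} {s : ℕ}
  {f : V → α} {a b v p : α}

/-- A proper colouring of `G` on `S` with colours `C` all of whose classes have size `s`, except
that one member too many has colour `p` and one too few has colour `v`, together with a family `A`
of accessible colours: those from which `v` can be reached by moving single vertices. -/
structure IsNearlyEquitable (G : SimpleGraph V) (S : Finset V) (C : Finset α) (s : ℕ)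
    (A : Finset α) (f : V → α) (v p : α) : Prop where
  coloring : IsColoringOn G S C ((s : α → ℤ) - Pi.single v 1 + Pi.single p 1) f
  subset : A ⊆ C
  target_mem : v ∈ A
  source_mem : p ∈ C
  reachIn : ∀ a ∈ A, ReachIn (Movable G S f) A a v

/-- The Hajnal–Szemerédi property of the subgraph of `G` induced on `S`, for colour classes of size
`s` and colours in `α`. -/
def EquitablyColorableOn (α : Type*) [DecidableEq α] (G : SimpleGraph V) (S : Finset V) (s : ℕ) :
    Prop :=
  ∀ C : Finset α, #S = #C * s → (∀ x ∈ S, #(neighborsIn G S x) < #C) →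
    ∃ f, IsColoringOn G S C s f

namespace IsNearlyEquitable

theorem exists_equitable_of_mem (hf : IsNearlyEquitable G S C s A f v p) (hp : p ∈ A) :
    ∃ f', IsColoringOn G S C s f' := by
  obtain ⟨f', hf'⟩ := hf.coloring.exists_shift hf.subset (hf.reachIn p hp)
  exact ⟨f', hf'.congr_size fun c _ => by simp only [Pi.add_apply, Pi.sub_apply]; ring⟩

theorem insert_of_movable (hf : IsNearlyEquitable G S C s A f v p) (hb : b ∈ C) (ha : a ∈ A)
    (hba : Movable G S f b a) : IsNearlyEquitable G S C s (insert b A) f v p where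
  coloring := hf.coloring
  subset := insert_subset hb hf.subset
  target_mem := mem_insert_of_mem hf.target_mem
  source_mem := hf.source_mem
  reachIn c hc := by
    have hA : ∀ c ∈ A, ReachIn (Movable G S f) (insert b A) c v := fun c hc =>
      (hf.reachIn c hc).mono_right (subset_insert b A)
    obtain rfl | hc := mem_insert.1 hc
    exacts [(hA a ha).head (mem_insert_of_mem ha) hba, hA c hc]

theorem card_colorUnion_sdiff (hf : IsNearlyEquitable G S C s A f v p) (hp : p ∉ A) :
    #(colorUnion S f (C \ A)) = #(C \ A) * s + 1 := by
  have hcard : ∀ c ∈ C \ A, (#(colorClass S f c) : ℤ) = s + (Pi.single p 1 : α → ℤ) c :=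
      fun c hc => by
    obtain ⟨hcC, hcA⟩ := mem_sdiff.1 hc
    have hcv : c ≠ v := fun h => hcA (h ▸ hf.target_mem)
    simp only [hf.coloring.card c hcC, Pi.sub_apply, Pi.add_apply, Pi.natCast_apply,
      Pi.single_eq_of_ne hcv, sub_zero]
  have hpD : p ∈ C \ A := mem_sdiff.2 ⟨hf.source_mem, hp⟩
  zify
  rw [card_colorUnion, Nat.cast_sum, sum_congr rfl hcard, sum_add_distrib, sum_const,
    sum_pi_single', if_pos hpD, nsmul_eq_mul]

theorem card_colorClass (hf : IsNearlyEquitable G S C s A f v p) (hp : p ∉ A) (ha : a ∈ A) :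
    (#(colorClass S f a) : ℤ) = s - (Pi.single v 1 : α → ℤ) a := by
  have hap : a ≠ p := fun h => hp (h ▸ ha)
  rw [hf.coloring.card a (hf.subset ha), Pi.add_apply, Pi.single_eq_of_ne hap, add_zero,
    Pi.sub_apply, Pi.natCast_apply]

theorem card_mul_card_colorClass_lt (hf : IsNearlyEquitable G S C s A f v p) (hp : p ∉ A)
    (ha : a ∈ A) : #(C \ A) * #(colorClass S f a) < #(colorUnion S f (C \ A)) := by
  have hle : #(colorClass S f a) ≤ s := by
    have := hf.card_colorClass hp ha
    have : 0 ≤ (Pi.single v 1 : α → ℤ) := Pi.single_nonneg.2 zero_le_one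
    have : 0 ≤ (Pi.single v 1 : α → ℤ) a := this a
    omega
  rw [hf.card_colorUnion_sdiff hp, Nat.lt_succ_iff]
  exact Nat.mul_le_mul_left _ hle

theorem exists_ne_target (hf : IsNearlyEquitable G S C s A f v p) (hp : p ∉ A)
    (hdeg : ∀ x ∈ S, #(neighborsIn G S x) < #C)
    (hsees : ∀ y ∈ colorUnion S f (C \ A), ∀ c ∈ A, SeesColor G S f y c) : ∃ a ∈ A, a ≠ v := by
  -- Otherwise every vertex outside the class of `v` has a neighbour in it, and double counting
  -- these adjacencies contradicts the degree bound.
  by_contra! hA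
  obtain rfl : A = {v} := eq_singleton_iff_unique_mem.2 ⟨hf.target_mem, hA⟩
  have hD : #(C \ {v}) + 1 = #C := card_sdiff_add_card_eq_card hf.subset
  set B := colorUnion S f (C \ {v})
  have hle : #B ≤ #(colorClass S f v) * #(C \ {v}) :=
    calc #B = ∑ y ∈ B, 1 := card_eq_sum_ones B
      _ ≤ ∑ y ∈ B, #(neighborsIn G (colorClass S f v) y) :=
        sum_le_sum fun y hy => card_pos.2 (hsees y hy v (mem_singleton_self v))
      _ = ∑ z ∈ colorClass S f v, #(neighborsIn G B z) := by
        simpa only [sum_const, smul_eq_mul, mul_one] using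
          sum_sum_neighborsIn G B (colorClass S f v) fun _ => 1
      _ ≤ #(colorClass S f v) * #(C \ {v}) := sum_le_card_nsmul _ _ _ fun z hz => by
        have := hdeg z (mem_colorClass.1 hz).1
        have : #(neighborsIn G B z) ≤ #(neighborsIn G S z) :=
          card_le_card (neighborsIn_mono colorUnion_subset)
        omega
  rw [mul_comm] at hle
  exact hle.not_gt (hf.card_mul_card_colorClass_lt hp hf.target_mem)

theorem exists_equitable_of_solo_movable [DecidableEq V] {y z : V} {g : V → α}
    (hf : IsNearlyEquitable G S C s A f v p) (hp : p ∉ A) (hz : z ∈ colorUnion S f A)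
    (hy : y ∈ colorUnion S f (C \ A)) (hzy : Solo G S f z y)
    (hg : IsColoringOn G ((colorUnion S f (C \ A)).erase y) (C \ A) s g)
    (ha : a ∈ A.erase (f z)) (hza : ¬ SeesColor G S f z a)
    (hav : ReachIn (Movable G S f) (A.erase (f z)) a v) :
    ∃ f', IsColoringOn G S C s f' := by
  obtain ⟨hyS, hyD⟩ := mem_colorUnion.1 hy
  obtain ⟨f', hf'⟩ := hf.coloring.exists_insert_of_solo_movable hf.subset hz (mem_sdiff.1 hyD).2
    hzy ha hza hav
  have hsize : ∀ c ∈ A, ((s : α → ℤ) - Pi.single v 1 + Pi.single p 1 + Pi.single v 1 :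
      α → ℤ) c = (s : α → ℤ) c := fun c hc => by
    have hcp : c ≠ p := fun h => hp (h ▸ hc)
    rw [add_right_comm, sub_add_cancel, Pi.add_apply, Pi.single_eq_of_ne hcp, add_zero]
  have hdisj : Disjoint (insert y (colorUnion S f A)) ((colorUnion S f (C \ A)).erase y) :=
    disjoint_left.2 fun x hx hxB => by grind [mem_colorUnion]
  have hunion : insert y (colorUnion S f A) ∪ (colorUnion S f (C \ A)).erase y = S := by
    ext x
    have := hf.coloring.mem x
    grind [mem_colorUnion]
  have h := (hf'.congr_size hsize).union hg hdisj disjoint_sdiff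
  rw [hunion, union_sdiff_of_subset hf.subset] at h
  exact ⟨_, h⟩

theorem exists_insert_of_solo_stuck [DecidableEq V] {y y' z : V} {g : V → α}
    (hf : IsNearlyEquitable G S C s A f v p) (hdeg : ∀ x ∈ S, #(neighborsIn G S x) < #C)
    (hp : p ∉ A) (hz : z ∈ colorUnion S f A)
    (hy : y ∈ colorUnion S f (C \ A)) (hzy : Solo G S f z y)
    (hg : IsColoringOn G ((colorUnion S f (C \ A)).erase y) (C \ A) s g)
    (hstuck : ∀ a ∈ A.erase (f z), SeesColor G S f z a)
    (hreach : ∀ a ∈ A, ReachIn (Movable G S f) (A.erase (f z)) a v)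
    (hy' : y' ∈ colorUnion S f (C \ A)) (hzy' : Solo G S f z y') (hne : y' ≠ y)
    (hadj : ¬ G.Adj y y') :
    ∃ c ∈ C \ A, ∃ h b, IsNearlyEquitable G S C s (insert c A) h v b := by
  obtain ⟨hzS, hzA⟩ := mem_colorUnion.1 hz
  set B := (colorUnion S f (C \ A)).erase y
  obtain ⟨b, hb, hzb⟩ : ∃ b ∈ C \ A, ¬ SeesColor G B g z b := exists_not_seesColor <| by
    have hzD := card_add_card_neighborsIn_le
      (disjoint_sdiff.mono_left (erase_subset (f z) A) : Disjoint _ (C \ A)) hstuck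
    have : #(neighborsIn G B z) < #(neighborsIn G (colorUnion S f (C \ A)) z) :=
      card_neighborsIn_erase_lt hy hzy.adj.symm
    have := card_erase_add_one hzA
    have := card_sdiff_add_card_eq_card hf.subset
    have := hdeg z hzS
    omega
  have hg' : IsColoringOn G B (C \ A) ((s : α → ℤ) - Pi.single v 1) g :=
    hg.congr_size fun c hc => by
      have hcv : c ≠ v := fun h => (mem_sdiff.1 hc).2 (h ▸ hf.target_mem)
      rw [Pi.sub_apply, Pi.single_eq_of_ne hcv, sub_zero]
  obtain ⟨h, hh, hclass, hclass_z⟩ := hf.coloring.exists_exchange hf.subset hz hy hzy hg'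
    (fun c hc => hf.card_colorClass hp hc) hb hzb
  have hfh : IsNearlyEquitable G S C s A h v b :=
    ⟨hh, hf.subset, hf.target_mem, (mem_sdiff.1 hb).1, fun a ha =>
      (ReachIn.of_exchange hstuck hclass hclass_z ha (hreach a ha)).mono_right (erase_subset _ _)⟩
  obtain ⟨hy'S, hy'D⟩ := mem_colorUnion.1 hy'
  have hhy' : h y' ∉ A :=
    notMem_of_exchange hzA hclass hclass_z hy'S (mem_sdiff.1 hy'D).2 hne
  exact ⟨h y', mem_sdiff.2 ⟨hh.mem y' hy'S, hhy'⟩, h, b, hfh.insert_of_movable (hh.mem y' hy'S) hzA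
    ⟨y', mem_colorClass.2 ⟨hy'S, rfl⟩, not_seesColor_of_exchange hclass_z hzy' hadj⟩⟩

theorem exists_coloring_erase [DecidableEq V] {y : V}
    (hIH : ∀ B ⊂ S, EquitablyColorableOn α G B s) (hf : IsNearlyEquitable G S C s A f v p)
    (hdeg : ∀ x ∈ S, #(neighborsIn G S x) < #C)
    (hp : p ∉ A) (hsees : ∀ y ∈ colorUnion S f (C \ A), ∀ c ∈ A, SeesColor G S f y c)
    (hy : y ∈ colorUnion S f (C \ A)) :
    ∃ g, IsColoringOn G ((colorUnion S f (C \ A)).erase y) (C \ A) s g := by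
  refine hIH _ ((erase_ssubset hy).trans_subset colorUnion_subset) _ ?_ fun x hx => ?_
  · rw [card_erase_of_mem hy, hf.card_colorUnion_sdiff hp, Nat.add_sub_cancel]
  · have hxB := mem_of_mem_erase hx
    have := card_add_card_neighborsIn_le (D := C \ A) disjoint_sdiff (hsees x hxB)
    have := card_le_card (neighborsIn_mono (G := G) (x := x)
      (erase_subset y (colorUnion S f (C \ A))))
    have := hdeg x (colorUnion_subset hxB)
    have := card_sdiff_add_card_eq_card hf.subset
    omega

theorem exists_equitable_or_exists_insert
    (hIH : ∀ B ⊂ S, EquitablyColorableOn α G B s) (hf : IsNearlyEquitable G S C s A f v p)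
    (hdeg : ∀ x ∈ S, #(neighborsIn G S x) < #C)
    (hp : p ∉ A) :
    (∃ f', IsColoringOn G S C s f') ∨
      ∃ c ∈ C \ A, ∃ f' p', IsNearlyEquitable G S C s (insert c A) f' v p' := by
  classical
  by_cases hsees : ∀ y ∈ colorUnion S f (C \ A), ∀ c ∈ A, SeesColor G S f y c
  · have hdeg' : ∀ x ∈ S, #(neighborsIn G S x) < #A + #(C \ A) := fun x hx => by
      have := hdeg x hx
      have := card_sdiff_add_card_eq_card hf.subset
      omega
    obtain ⟨u, hu, hT, hreach⟩ := exists_minimal_cutOff hf.target_mem hf.reachIn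
      (hf.exists_ne_target hp hdeg hsees)
    obtain ⟨z, hz, y, hy, hzy, hcases⟩ := exists_solo hdeg' disjoint_sdiff cutOff_subset hT hu
      (self_notMem_cutOff (hf.reachIn u hu))
      (fun c hc => hf.card_mul_card_colorClass_lt hp (cutOff_subset hc)) hsees
      fun z hz a ha => not_not.1 fun hza => by
        obtain ⟨hzS, hzT⟩ := mem_colorUnion.1 hz
        obtain ⟨haA, haT⟩ := mem_sdiff.1 ha
        exact haT (mem_insert.2 (eq_or_mem_cutOff_of_rel hzT haA
          ⟨z, mem_colorClass.2 ⟨hzS, rfl⟩, hza⟩))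
    have hreach_z := hreach (f z) (mem_colorUnion.1 hz).2
    have hzA : z ∈ colorUnion S f A := colorUnion_mono cutOff_subset hz
    obtain ⟨g, hg⟩ := hf.exists_coloring_erase hIH hdeg hp hsees hy
    obtain ⟨a, ha, hza⟩ | ⟨hstuck, y', hy', hzy', hne, hadj⟩ := hcases
    · exact .inl (hf.exists_equitable_of_solo_movable hp hzA hy hzy hg ha hza
        (hreach_z a (mem_of_mem_erase ha)))
    · exact .inr (hf.exists_insert_of_solo_stuck hdeg hp hzA hy hzy hg hstuck hreach_z hy' hzy'
        hne hadj)
  · push Not at hsees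
    obtain ⟨y, hy, c, hc, hyc⟩ := hsees
    obtain ⟨hyS, hyD⟩ := mem_colorUnion.1 hy
    have hmov : Movable G S f (f y) c := ⟨y, mem_colorClass.2 ⟨hyS, rfl⟩, hyc⟩
    exact .inr ⟨f y, hyD, f, p, hf.insert_of_movable (mem_sdiff.1 hyD).1 hc hmov⟩

theorem exists_equitable
    (hIH : ∀ B ⊂ S, EquitablyColorableOn α G B s) (hf : IsNearlyEquitable G S C s A f v p)
    (hdeg : ∀ x ∈ S, #(neighborsIn G S x) < #C) :
    ∃ f', IsColoringOn G S C s f' := by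
  induction hn : #(C \ A) using Nat.strong_induction_on generalizing A f p with
  | _ n ih =>
    by_cases hp : p ∈ A
    · exact hf.exists_equitable_of_mem hp
    obtain hf' | ⟨c, hc, f', p', hf'⟩ := hf.exists_equitable_or_exists_insert hIH hdeg hp
    · exact hf'
    · refine ih _ ?_ hf' rfl
      rw [← hn, sdiff_insert]
      exact card_lt_card (erase_ssubset hc)

end IsNearlyEquitable

end NearlyEquitable

section HajnalSzemeredi

variable [DecidableEq α] {G : SimpleGraph V} {S : Finset V} {C : Finset α} {s : ℕ} {f : V → α}
  {u : V}

theorem exists_isColoringOn_of_forall_not_adj [Nonempty α] (hcard : #S = #C * s)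
    (hG : ∀ x ∈ S, ∀ y ∈ S, ¬ G.Adj x y) : ∃ f, IsColoringOn G S C s f := by
  classical
  induction C using Finset.induction_on generalizing S with
  | empty =>
    obtain rfl : S = ∅ := by rwa [card_empty, zero_mul, card_eq_zero] at hcard
    exact ⟨fun _ => Classical.arbitrary α, by simp, by simp, by simp⟩
  | insert c C hc ih =>
    rw [card_insert_of_notMem hc, add_one_mul] at hcard
    obtain ⟨T, hTS, hT⟩ := exists_subset_card_eq (le_add_self.trans hcard.ge)
    obtain ⟨f, hf⟩ := ih (S := S \ T) (by rw [card_sdiff_of_subset hTS]; omega)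
      fun x hx y hy => hG x (mem_sdiff.1 hx).1 y (mem_sdiff.1 hy).1
    have hconst : IsColoringOn G T {c} s fun _ => c := by
      refine ⟨fun _ _ => mem_singleton_self c,
        fun x hx y hy hxy => absurd hxy (hG x (hTS hx) y (hTS hy)), fun d hd => ?_⟩
      rw [colorClass, filter_true_of_mem fun _ _ => (mem_singleton.1 hd).symm, hT,
        Pi.natCast_apply]
    have h := hf.union hconst sdiff_disjoint (disjoint_singleton_right.2 hc)
    rw [sdiff_union_of_subset hTS, union_comm, ← insert_eq] at h
    exact ⟨_, h⟩

theorem exists_isNearlyEquitable_of_deleteIncidenceSet (hu : u ∈ S)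
    (hdeg : #(neighborsIn G S u) < #C) (hf : IsColoringOn (G.deleteIncidenceSet u) S C s f) :
    ∃ f' p, IsNearlyEquitable G S C s {f u} f' (f u) p := by
  classical
  obtain ⟨p, hp, hup⟩ := exists_not_seesColor (f := f) <|
    (card_le_card (neighborsIn_mono (erase_subset u S))).trans_lt hdeg
  have hadj : ∀ x ∈ S.erase u, ∀ y ∈ S.erase u, G.Adj x y → (G.deleteIncidenceSet u).Adj x y :=
    fun x hx y hy hxy =>
      SimpleGraph.deleteIncidenceSet_adj.2 ⟨hxy, (mem_erase.1 hx).1, (mem_erase.1 hy).1⟩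
  have hf' := ((hf.erase hu).of_adj hadj).insert (notMem_erase u S) hp hup
  rw [insert_erase hu] at hf'
  refine ⟨_, p, hf', singleton_subset_iff.2 (hf.mem u hu), mem_singleton_self _, hp, fun a ha => ?_⟩
  rw [mem_singleton.1 ha]
  exact .refl

theorem equitablyColorableOn_of_forall_adj_mem [Nonempty α]
    (hIH : ∀ B ⊂ S, ∀ H : SimpleGraph V, EquitablyColorableOn α H B s) {W : Finset V} (hWS : W ⊆ S)
    (hW : ∀ x ∈ S, ∀ y ∈ S, G.Adj x y → x ∈ W) : EquitablyColorableOn α G S s := by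
  classical
  induction W using Finset.induction_on generalizing G with
  | empty =>
    exact fun C hcard _ => exists_isColoringOn_of_forall_not_adj hcard
      fun x hx y hy hxy => notMem_empty x (hW x hx y hy hxy)
  | insert u W _ ih =>
    intro C hcard hdeg
    have hu : u ∈ S := hWS (mem_insert_self u W)
    have hH : ∀ x ∈ S, ∀ y ∈ S, (G.deleteIncidenceSet u).Adj x y → x ∈ W := fun x hx y hy hxy => by
      obtain ⟨hxy, hxu, -⟩ := SimpleGraph.deleteIncidenceSet_adj.1 hxy
      exact mem_of_mem_insert_of_ne (hW x hx y hy hxy) hxu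
    have hdegH : ∀ x ∈ S, #(neighborsIn (G.deleteIncidenceSet u) S x) < #C := fun x hx =>
      (card_le_card (neighborsIn_subset_of_le (G.deleteIncidenceSet_le u))).trans_lt (hdeg x hx)
    obtain ⟨f, hf⟩ := ih ((subset_insert u W).trans hWS) hH C hcard hdegH
    obtain ⟨f', p, hf'⟩ := exists_isNearlyEquitable_of_deleteIncidenceSet hu (hdeg u hu) hf
    exact hf'.exists_equitable (fun B hB => hIH B hB G) hdeg

theorem equitablyColorableOn [Nonempty α] (G : SimpleGraph V) (S : Finset V) (s : ℕ) :
    EquitablyColorableOn α G S s := by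
  induction S using Finset.strongInduction generalizing G with
  | H S ih =>
    exact equitablyColorableOn_of_forall_adj_mem ih subset_rfl fun x hx _ _ _ => hx

theorem neighborsIn_univ [Fintype V] (G : SimpleGraph V) (x : V) [Fintype (G.neighborSet x)] :
    neighborsIn G univ x = G.neighborFinset x := by
  ext y
  simp only [mem_neighborsIn, mem_univ, true_and, SimpleGraph.mem_neighborFinset]

theorem exists_equitable_coloring_of_card_eq [Fintype V] [Fintype α] [Nonempty α]
    (G : SimpleGraph V) [G.LocallyFinite] (hcard : Fintype.card V = Fintype.card α * s)
    (hdeg : ∀ x, G.degree x < Fintype.card α) :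
    ∃ f : G.Coloring α, ∀ a, #{x | f x = a} = s := by
  obtain ⟨f, hf⟩ := equitablyColorableOn (α := α) G univ s univ hcard fun x _ => by
    rw [neighborsIn_univ]
    exact hdeg x
  exact ⟨.mk f fun {x y} => hf.proper x (mem_univ x) y (mem_univ y),
    fun a => Nat.cast_injective (hf.card a (mem_univ a))⟩

theorem degree_sum_inl {W : Type*} (G : SimpleGraph V) (H : SimpleGraph W) (v : V)
    [Fintype (G.neighborSet v)] [Fintype ((G ⊕g H).neighborSet (.inl v))] :
    (G ⊕g H).degree (.inl v) = G.degree v := by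
  have h : (G ⊕g H).neighborFinset (.inl v) = (G.neighborFinset v).map .inl := by
    ext (w | w) <;> simp
  rw [← SimpleGraph.card_neighborFinset_eq_degree, h, card_map,
    SimpleGraph.card_neighborFinset_eq_degree]

theorem degree_sum_inr {W : Type*} (G : SimpleGraph V) (H : SimpleGraph W) (w : W)
    [Fintype (H.neighborSet w)] [Fintype ((G ⊕g H).neighborSet (.inr w))] :
    (G ⊕g H).degree (.inr w) = H.degree w := by
  have h : (G ⊕g H).neighborFinset (.inr w) = (H.neighborFinset w).map .inr := by
    ext (v | v) <;> simp
  rw [← SimpleGraph.card_neighborFinset_eq_degree, h, card_map,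
    SimpleGraph.card_neighborFinset_eq_degree]

theorem exists_add_eq_succ_mul (n r : ℕ) : ∃ p s, p ≤ r ∧ n + p = (r + 1) * s := by
  have hdiv := Nat.div_add_mod (n + r) (r + 1)
  have hmod := Nat.mod_lt (n + r) r.add_one_pos
  exact ⟨r - (n + r) % (r + 1), (n + r) / (r + 1), Nat.sub_le _ _, by omega⟩

theorem exists_equitable_coloring [Fintype V] (G : SimpleGraph V) [G.LocallyFinite] {r : ℕ}
    (hdeg : ∀ x, G.degree x ≤ r) :
    ∃ f : G.Coloring (Fin (r + 1)), ∀ a b, #{x | f x = a} ≤ #{x | f x = b} + 1 := by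
  classical
  -- Adding a disjoint clique on `p ≤ r` vertices makes the number of vertices divisible by `r + 1`;
  -- each colour occurs at most once in the clique.
  obtain ⟨p, s, hp, hs⟩ := exists_add_eq_succ_mul (Fintype.card V) r
  let K : SimpleGraph (Fin p) := ⊤
  have hdegGK : ∀ x, (G ⊕g K).degree x < Fintype.card (Fin (r + 1)) := by
    rw [Fintype.card_fin]
    rintro (x | i)
    · exact (degree_sum_inl G K x).trans_lt (Nat.lt_succ_of_le (hdeg x))
    · refine (degree_sum_inr G K i).trans_lt ?_
      rw [SimpleGraph.complete_graph_degree, Fintype.card_fin]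
      omega
  obtain ⟨f, hf⟩ := exists_equitable_coloring_of_card_eq (s := s) (G ⊕g K)
    (by simpa only [Fintype.card_sum, Fintype.card_fin] using hs) hdegGK
  have hsplit : ∀ c, #{x | f.sumLeft x = c} + #{i | f.sumRight i = c} = s := fun c => by
    simp only [← hf c, card_filter, Fintype.sum_sum_type]
    rfl
  have hone : ∀ c, #{i | f.sumRight i = c} ≤ 1 := fun c => card_le_one.2 fun i hi j hj => by
    by_contra hij
    exact f.sumRight.valid (v := i) (w := j) hij
      ((mem_filter.1 hi).2.trans (mem_filter.1 hj).2.symm)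
  refine ⟨f.sumLeft, fun a b => ?_⟩
  have := hsplit a
  have := hsplit b
  have := hone b
  omega

end HajnalSzemeredi

theorem degree_fromRel_le [DecidableEq V] (E : Finset (V × V)) (x : V)
    [Fintype ((SimpleGraph.fromRel fun x y => (x, y) ∈ E).neighborSet x)] :
    (SimpleGraph.fromRel fun x y => (x, y) ∈ E).degree x ≤
      #{p ∈ E | p.1 = x} + #{p ∈ E | p.2 = x} := by
  have hsub : (SimpleGraph.fromRel fun x y => (x, y) ∈ E).neighborFinset x ⊆
      ({p ∈ E | p.1 = x} : Finset (V × V)).image Prod.snd ∪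
        ({p ∈ E | p.2 = x} : Finset (V × V)).image Prod.fst := fun y hy => by
    rw [SimpleGraph.mem_neighborFinset, SimpleGraph.fromRel_adj] at hy
    refine mem_union.2 (hy.2.imp (fun h => ?_) fun h => ?_)
    · exact mem_image.2 ⟨(x, y), mem_filter.2 ⟨h, rfl⟩, rfl⟩
    · exact mem_image.2 ⟨(y, x), mem_filter.2 ⟨h, rfl⟩, rfl⟩
  exact (card_le_card hsub).trans
    ((card_union_le _ _).trans (Nat.add_le_add card_image_le card_image_le))

end HajnalSzemeredi

theorem stmt13 {V : Type*} [Fintype V] [DecidableEq V] (k : ℕ) (hk : 1 ≤ k)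
    (E : Finset (V × V)) (hloop : ∀ p ∈ E, p.1 ≠ p.2)
    (hout : ∀ u : V, (E.filter fun p => p.1 = u).card ≤ k)
    (hin : ∀ v : V, (E.filter fun p => p.2 = v).card ≤ k) :
    ∃ f : V → Fin (2 * k + 1),
      (∀ p ∈ E, f p.1 ≠ f p.2) ∧
      ∀ x y : Fin (2 * k + 1),
        (Finset.univ.filter fun v => f v = x).card ≤
          (Finset.univ.filter fun v => f v = y).card + 1 := by
  obtain ⟨f, hf⟩ := HajnalSzemeredi.exists_equitable_coloring
    (SimpleGraph.fromRel fun x y => (x, y) ∈ E) (r := 2 * k) fun x => by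
      have := HajnalSzemeredi.degree_fromRel_le E x
      have := hout x
      have := hin x
      omega
  exact ⟨f, fun p hp => f.valid ((SimpleGraph.fromRel_adj _ _ _).2 ⟨hloop p hp, .inl hp⟩), hf⟩
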